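/- Let p ∈ (1,∞), p' = p/(p−1), let A ⊆ M×M be a maximal monotone p-coercive graph, and let U ⊂ ℝ^{1+d} be a bounded Lebesgue-measurable set. For each n ∈ ℕ let Jⁿ, Dⁿ : U → M be measurable with ∫_U |Jⁿ|^{p'} < ∞, ∫_U |Dⁿ|^p < ∞ and (Jⁿ(z),Dⁿ(z)) ∈ A for a.e. z ∈ U. Let J : U → M with ∫_U |J|^{p'} < ∞ and D : U → M with ∫_U |D|^p < ∞ be such that Jⁿ → J weakly in L^{p'}(U;M) (i.e., ∫_U Jⁿ:Φ → ∫_U J:Φ for every measurable Φ : U → M with ∫_U |Φ|^p < ∞) and Dⁿ → D weakly in L^p(U;M) (i.e., ∫_U Dⁿ:Ψ → ∫_U D:Ψ for every measurable Ψ : U → M with ∫_U |Ψ|^{p'} < ∞). If limsup_{n→∞} ∫_U Jⁿ:Dⁿ ≤ ∫_U J:D, then (J(z),D(z)) ∈ A for almost every z ∈ U, and Jⁿ:Dⁿ → J:D weakly in L¹(U), i.e., ∫_U (Jⁿ:Dⁿ)φ → ∫_U (J:D)φ for every bounded measurable φ : U → ℝ. -/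

import Mathlib

/-!
The limit is identified by a measurable form of Minty's trick. Integrating the monotonicity
inequality against a pair `(a, b)` of bounded measurable functions with values in `A`, and using
the weak convergences and the limsup condition, gives `0 ≤ ∫ ⟪J - a, D - b⟫`
(`integral_inner_nonneg`). Since the limsup condition is only global, this cannot be localised by
restricting to a subset of `U`; instead `(a, b)` is chosen, at each point, to be a minimiser of
`⟪J - q.1, D - q.2⟫` over finitely many points `q` of a countable dense subset of `A`. Maximality
makes the infimum over all `q ∈ A` nonpositive, so as the number of points grows the positive parts
of the minima tend to `0` in `L¹`. The integrals being nonnegative, the negative parts vanish as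
well, so `⟪J - q.1, D - q.2⟫ ≥ 0` a.e. for all `q` in the dense set, and maximality gives
`(J, D) ∈ A` a.e. (`ae_mem`). Neither a resolvent of `A` nor a duality map is needed.

Then `⟪Jn - J, Dn - D⟫ ≥ 0` a.e., with integrals tending to `0`; this `L¹` convergence yields the
weak convergence of the products (`tendsto_integral_mul`).

The `limsup` is that of a real sequence, so its use requires an upper bound for
`∫ ⟪Jn, Dn⟫`. This comes from Banach–Steinhaus and coercivity (`exists_integral_le`).
-/

open scoped RealInnerProductSpace
open MeasureTheory Filter

/-- The space of real N×d matrices with the Frobenius inner product,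
modelled as a Euclidean space. -/
abbrev Mat (N d : ℕ) := EuclideanSpace ℝ (Fin N × Fin d)

namespace GraphStability

variable {X E : Type*} [MeasurableSpace X] {μ : Measure X}
  [NormedAddCommGroup E] [InnerProductSpace ℝ E] {P Q : ENNReal}

/-! ### Hölder pairing of dual exponents -/

lemma integrable_inner_of_memLp [ENNReal.HolderConjugate Q P] {f g : X → E}
    (hf : MemLp f Q μ) (hg : MemLp g P μ) : Integrable (fun z => ⟪f z, g z⟫) μ := by
  rw [← memLp_one_iff_integrable]
  exact (innerSL ℝ (E := E)).memLp_of_bilin (r := 1) hf hg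

lemma memLp_ofReal {F : Type*} [NormedAddCommGroup F] {r : ℝ} (hr : 0 < r) {f : X → F}
    (hf : AEStronglyMeasurable f μ) (hi : Integrable (fun z => ‖f z‖ ^ r) μ) :
    MemLp f (ENNReal.ofReal r) μ := by
  rw [← integrable_norm_rpow_iff hf (by simpa using hr) ENNReal.ofReal_ne_top]
  simpa [ENNReal.toReal_ofReal hr.le] using hi

lemma integrable_of_memLp_ofReal {F : Type*} [NormedAddCommGroup F] {r : ℝ} (hr : 0 < r) {f : X → F}
    (hf : MemLp f (ENNReal.ofReal r) μ) : Integrable (fun z => ‖f z‖ ^ r) μ := by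
  have := hf.integrable_norm_rpow (by simpa using hr) ENNReal.ofReal_ne_top
  simpa [ENNReal.toReal_ofReal hr.le] using this

/-! ### A priori bound for the products -/

/-- An explicit form of the fact that superlinear growth dominates: `c x ^ p ≤ a x + b` bounds `x`. -/
lemma le_of_mul_rpow_le {p a b c x : ℝ} (hp : 1 < p) (hc : 0 < c) (ha : 0 ≤ a) (hb : 0 ≤ b)
    (hx : 0 ≤ x) (h : c * x ^ p ≤ a * x + b) :
    x ≤ 1 + ((a + b) / c) ^ (1 / (p - 1)) := by
  have hp1 : 0 < p - 1 := by linarith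
  rcases le_total x 1 with h1 | h1
  · have : 0 ≤ ((a + b) / c) ^ (1 / (p - 1)) := by positivity
    linarith
  · have hx0 : 0 < x := by linarith
    have h2 : x ^ (p - 1) ≤ (a + b) / c := by
      rw [le_div_iff₀ hc, ← mul_le_mul_iff_left₀ hx0]
      have : x ^ p = x ^ (p - 1) * x := by
        conv_rhs => rw [← Real.rpow_one x, ← Real.rpow_mul hx, ← Real.rpow_add hx0]
        simp
      nlinarith
    have h3 := Real.rpow_le_rpow (by positivity) h2 (by positivity : 0 ≤ 1 / (p - 1))
    rw [← Real.rpow_mul hx, mul_one_div_cancel hp1.ne', Real.rpow_one] at h3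
    linarith

/-- A weakly convergent sequence is bounded, by Banach–Steinhaus for the functionals
`Φ ↦ ∫ ⟪Jn n, Φ⟫` on `L^P`. -/
lemma exists_integral_inner_le [MeasurableSpace E] [BorelSpace E] [CompleteSpace E]
    [Fact (1 ≤ P)] [Fact (1 ≤ Q)] [ENNReal.HolderConjugate Q P]
    {Jn : ℕ → X → E} {J : X → E} (hJn : ∀ n, MemLp (Jn n) Q μ)
    (hweak : ∀ Φ : X → E, Measurable Φ → MemLp Φ P μ →
      Tendsto (fun n => ∫ z, ⟪Jn n z, Φ z⟫ ∂μ) atTop (nhds (∫ z, ⟪J z, Φ z⟫ ∂μ))) :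
    ∃ R : ℝ, 0 ≤ R ∧ ∀ n, ∀ Φ : X → E, MemLp Φ P μ →
      ∫ z, ⟪Jn n z, Φ z⟫ ∂μ ≤ R * (eLpNorm Φ P μ).toReal := by
  let T : ℕ → Lp E P μ →L[ℝ] ℝ := fun n => (innerSL ℝ (E := E)).lpPairing μ Q P ((hJn n).toLp)
  have hT : ∀ n (Φ : X → E) (f : Lp E P μ), f =ᵐ[μ] Φ → T n f = ∫ z, ⟪Jn n z, Φ z⟫ ∂μ := by
    intro n Φ f hf
    simp only [T, ContinuousLinearMap.lpPairing_eq_integral]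
    apply integral_congr_ae
    filter_upwards [hf, (hJn n).coeFn_toLp] with z h1 h2
    rw [h1, h2, innerSL_apply_apply]
  obtain ⟨R, hR⟩ := banach_steinhaus (g := T) (fun f => by
    have hsm := Lp.stronglyMeasurable f
    obtain ⟨C, hC⟩ := (hweak f hsm.measurable (Lp.memLp f)).norm.bddAbove_range
    refine ⟨C, fun n => ?_⟩
    rw [hT n f f .rfl]
    exact hC ⟨n, rfl⟩)
  refine ⟨R, (norm_nonneg _).trans (hR 0), fun n Φ hΦ => ?_⟩
  rw [← hT n Φ hΦ.toLp hΦ.coeFn_toLp]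
  calc T n hΦ.toLp ≤ ‖T n hΦ.toLp‖ := le_abs_self _
    _ ≤ ‖T n‖ * ‖hΦ.toLp‖ := (T n).le_opNorm _
    _ ≤ _ := by
      rw [Lp.norm_toLp]
      gcongr
      exact hR n

/-- The integrals `∫ ⟪Jn n, Dn n⟫` are bounded above. Only the weak convergence of `Jn` is used:
with `x = ‖Dn n‖_p`, coercivity and the bound on `Jn` give `C₁ x ^ p - C₂ μ(X) ≤ R x`. -/
lemma exists_integral_le [IsFiniteMeasure μ] [MeasurableSpace E] [BorelSpace E] [CompleteSpace E]
    {p q : ℝ} (hpq : q.HolderConjugate p) {A : Set (E × E)}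
    {C₁ C₂ : ℝ} (hC₁ : 0 < C₁) (hC₂ : 0 < C₂)
    (hA4 : ∀ w ∈ A, C₁ * (‖w.1‖ ^ q + ‖w.2‖ ^ p) - C₂ ≤ ⟪w.1, w.2⟫)
    {Jn Dn : ℕ → X → E} {J : X → E}
    (hJn : ∀ n, MemLp (Jn n) (ENNReal.ofReal q) μ) (hDn : ∀ n, MemLp (Dn n) (ENNReal.ofReal p) μ)
    (hinA : ∀ n, ∀ᵐ z ∂μ, (Jn n z, Dn n z) ∈ A)
    (hweak : ∀ Φ : X → E, Measurable Φ → MemLp Φ (ENNReal.ofReal p) μ →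
      Tendsto (fun n => ∫ z, ⟪Jn n z, Φ z⟫ ∂μ) atTop (nhds (∫ z, ⟪J z, Φ z⟫ ∂μ))) :
    ∃ B : ℝ, ∀ n, ∫ z, ⟪Jn n z, Dn n z⟫ ∂μ ≤ B := by
  have : ENNReal.HolderConjugate (ENNReal.ofReal q) (ENNReal.ofReal p) := hpq.ennrealOfReal
  have : Fact (1 ≤ ENNReal.ofReal q) := ⟨by simpa using hpq.lt.le⟩
  have : Fact (1 ≤ ENNReal.ofReal p) := ⟨by simpa using hpq.symm.lt.le⟩
  have hp1 := hpq.symm.lt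
  have hp0 : 0 < p := by linarith
  obtain ⟨R, hR0, hR⟩ := exists_integral_inner_le hJn hweak
  set b := C₂ * μ.real Set.univ with hb
  refine ⟨R * (1 + ((R + b) / C₁) ^ (1 / (p - 1))), fun n => ?_⟩
  refine (hR n (Dn n) (hDn n)).trans (mul_le_mul_of_nonneg_left ?_ hR0)
  refine le_of_mul_rpow_le hp1 hC₁ hR0 (by positivity) ENNReal.toReal_nonneg ?_
  have hint := integrable_of_memLp_ofReal hp0 (hDn n)
  have hnorm : (eLpNorm (Dn n) (ENNReal.ofReal p) μ).toReal ^ p = ∫ z, ‖Dn n z‖ ^ p ∂μ := by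
    have h0 : 0 ≤ ∫ z, ‖Dn n z‖ ^ p ∂μ := integral_nonneg fun z => by positivity
    rw [(hDn n).eLpNorm_eq_integral_rpow_norm (by simpa using hp0) ENNReal.ofReal_ne_top,
      ENNReal.toReal_ofReal hp0.le, ENNReal.toReal_ofReal (by positivity), ← Real.rpow_mul h0,
      inv_mul_cancel₀ hp0.ne', Real.rpow_one]
  have h1 : ∫ z, (C₁ * ‖Dn n z‖ ^ p - C₂) ∂μ ≤ ∫ z, ⟪Jn n z, Dn n z⟫ ∂μ := by
    refine integral_mono_ae ((hint.const_mul _).sub (integrable_const _))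
      (integrable_inner_of_memLp (hJn n) (hDn n)) ?_
    filter_upwards [hinA n] with z hz
    have := hA4 _ hz
    have h2 : 0 ≤ C₁ * ‖Jn n z‖ ^ q := by positivity
    simp only at this ⊢
    linarith
  rw [integral_sub (hint.const_mul _) (integrable_const _), integral_const_mul, integral_const,
    smul_eq_mul, mul_comm _ C₂, ← hnorm] at h1
  linarith [hR n (Dn n) (hDn n)]

/-! ### Minty's trick with a measurable selection -/

/-- Integrated monotonicity passes to the limit against any admissible pair `(a, b)` with values
in `A`. -/
lemma integral_inner_nonneg [MeasurableSpace E] [ENNReal.HolderConjugate Q P] {A : Set (E × E)}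
    (hA2 : ∀ q₁ ∈ A, ∀ q₂ ∈ A, 0 ≤ ⟪q₁.1 - q₂.1, q₁.2 - q₂.2⟫)
    {Jn Dn : ℕ → X → E} {J D a b : X → E}
    (hJn : ∀ n, MemLp (Jn n) Q μ) (hDn : ∀ n, MemLp (Dn n) P μ)
    (hJ : MemLp J Q μ) (hD : MemLp D P μ)
    (hinA : ∀ n, ∀ᵐ z ∂μ, (Jn n z, Dn n z) ∈ A)
    (hJweak : ∀ Φ : X → E, Measurable Φ → MemLp Φ P μ →
      Tendsto (fun n => ∫ z, ⟪Jn n z, Φ z⟫ ∂μ) atTop (nhds (∫ z, ⟪J z, Φ z⟫ ∂μ)))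
    (hDweak : ∀ Ψ : X → E, Measurable Ψ → MemLp Ψ Q μ →
      Tendsto (fun n => ∫ z, ⟪Dn n z, Ψ z⟫ ∂μ) atTop (nhds (∫ z, ⟪D z, Ψ z⟫ ∂μ)))
    (hlim : ∀ ε > 0, ∀ᶠ n in atTop, ∫ z, ⟪Jn n z, Dn n z⟫ ∂μ ≤ ∫ z, ⟪J z, D z⟫ ∂μ + ε)
    (ha : MemLp a Q μ) (hb : MemLp b P μ) (ham : Measurable a) (hbm : Measurable b)
    (hab : ∀ᵐ z ∂μ, (a z, b z) ∈ A) :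
    0 ≤ ∫ z, ⟪J z - a z, D z - b z⟫ ∂μ := by
  have expand : ∀ {f g : X → E}, MemLp f Q μ → MemLp g P μ →
      ∫ z, ⟪f z - a z, g z - b z⟫ ∂μ = ∫ z, ⟪f z, g z⟫ ∂μ - ∫ z, ⟪f z, b z⟫ ∂μ
        - ∫ z, ⟪g z, a z⟫ ∂μ + ∫ z, ⟪a z, b z⟫ ∂μ := by
    intro f g hf hg
    have h1 := integrable_inner_of_memLp hf hg
    have h2 := integrable_inner_of_memLp hf hb
    have h3 : Integrable (fun z => ⟪g z, a z⟫) μ := by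
      simpa only [real_inner_comm] using integrable_inner_of_memLp ha hg
    have h4 := integrable_inner_of_memLp ha hb
    have h12 : Integrable (fun z => ⟪f z, g z⟫ - ⟪f z, b z⟫) μ := h1.sub h2
    have h123 : Integrable (fun z => ⟪f z, g z⟫ - ⟪f z, b z⟫ - ⟪g z, a z⟫) μ := h12.sub h3
    rw [← integral_sub h1 h2, ← integral_sub h12 h3, ← integral_add h123 h4]
    congr 1; ext z
    simp only [inner_sub_left, inner_sub_right, real_inner_comm (a z) (g z)]
    ring
  refine le_of_forall_pos_le_add fun ε hε => ?_
  rw [expand hJ hD]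
  have ht : Tendsto (fun n => ∫ z, ⟪J z, D z⟫ ∂μ + ε - ∫ z, ⟪Jn n z, b z⟫ ∂μ
        - ∫ z, ⟪Dn n z, a z⟫ ∂μ + ∫ z, ⟪a z, b z⟫ ∂μ) atTop
      (nhds (∫ z, ⟪J z, D z⟫ ∂μ + ε - ∫ z, ⟪J z, b z⟫ ∂μ
        - ∫ z, ⟪D z, a z⟫ ∂μ + ∫ z, ⟪a z, b z⟫ ∂μ)) :=
    (((hJweak b hbm hb).const_sub _).sub (hDweak a ham ha)).add_const _
  have := ge_of_tendsto (b := (0 : ℝ)) ht (by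
    filter_upwards [hlim ε hε] with n hn
    have h0 : 0 ≤ ∫ z, ⟪Jn n z - a z, Dn n z - b z⟫ ∂μ := by
      apply integral_nonneg_of_ae
      filter_upwards [hab, hinA n] with z h1 h2
      exact hA2 _ h2 _ h1
    rw [expand (hJn n) (hDn n)] at h0
    linarith)
  linarith

/-- Maximality gives `inf_{q ∈ A} ⟪w.1 - q.1, w.2 - q.2⟫ ≤ 0` for every `w`: either `w ∈ A`, or
some `q ∈ A` makes the product negative. -/
lemma exists_inner_lt {A : Set (E × E)}
    (hA3 : ∀ q : E × E, (∀ q' ∈ A, 0 ≤ ⟪q.1 - q'.1, q.2 - q'.2⟫) → q ∈ A)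
    (w : E × E) {ε : ℝ} (hε : 0 < ε) : ∃ q ∈ A, ⟪w.1 - q.1, w.2 - q.2⟫ < ε := by
  by_cases hw : w ∈ A
  · exact ⟨w, hw, by simpa using hε⟩
  · by_contra! h
    exact hw (hA3 w fun q hq => hε.le.trans (h q hq))

open Classical in
/-- Among `q 0, …, q m`, a point minimising `⟪w.1 - (q k).1, w.2 - (q k).2⟫`, built recursively so
that it depends measurably on `w`. -/
noncomputable def sel (q : ℕ → E × E) (w : E × E) : ℕ → E × E
  | 0 => q 0
  | k + 1 => if ⟪w.1 - (q (k + 1)).1, w.2 - (q (k + 1)).2⟫ <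
      ⟪w.1 - (sel q w k).1, w.2 - (sel q w k).2⟫ then q (k + 1) else sel q w k

lemma sel_mem_image (q : ℕ → E × E) (w : E × E) (m : ℕ) : ∃ k ≤ m, sel q w m = q k := by
  induction m with
  | zero => exact ⟨0, le_rfl, rfl⟩
  | succ m ih =>
    rw [sel]
    split_ifs
    · exact ⟨m + 1, le_rfl, rfl⟩
    · obtain ⟨k, hk, h⟩ := ih
      exact ⟨k, by omega, h⟩

lemma inner_sel_le (q : ℕ → E × E) (w : E × E) {k m : ℕ} (hk : k ≤ m) :
    ⟪w.1 - (sel q w m).1, w.2 - (sel q w m).2⟫ ≤ ⟪w.1 - (q k).1, w.2 - (q k).2⟫ := by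
  induction m with
  | zero =>
    obtain rfl : k = 0 := by omega
    exact le_rfl
  | succ m ih =>
    rw [sel]
    split_ifs with h
    · rcases Nat.lt_or_eq_of_le hk with h' | rfl
      · exact h.le.trans (ih (by omega))
      · exact le_rfl
    · rcases Nat.lt_or_eq_of_le hk with h' | rfl
      · exact ih (by omega)
      · exact not_lt.1 h

lemma measurable_sel [MeasurableSpace E] [BorelSpace E] [SecondCountableTopology E]
    (q : ℕ → E × E) (m : ℕ) : Measurable fun w => sel q w m := by
  induction m with
  | zero => exact measurable_const
  | succ m ih =>
    simp only [sel]
    refine Measurable.ite (measurableSet_lt ?_ ?_) measurable_const ih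
    · fun_prop
    · exact (measurable_fst.sub ih.fst).inner (measurable_snd.sub ih.snd)

lemma exists_bound_sel (q : ℕ → E × E) (m : ℕ) : ∃ C : ℝ, ∀ w, ‖sel q w m‖ ≤ C := by
  refine ⟨∑ k ∈ Finset.range (m + 1), ‖q k‖, fun w => ?_⟩
  obtain ⟨k, hk, h⟩ := sel_mem_image q w m
  rw [h]
  exact Finset.single_le_sum (f := fun k => ‖q k‖) (fun _ _ => norm_nonneg _)
    (Finset.mem_range.2 (by omega))

/-- Pointwise membership from the integrated inequality. For `q` dense in `A` and `S m` the minimising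
selection, `G m = ⟪J - (S m).1, D - (S m).2⟫` has nonnegative integral and decreases to a limit
that is `≤ 0`; hence its negative part vanishes in the limit. -/
lemma ae_mem [IsFiniteMeasure μ] [MeasurableSpace E] [BorelSpace E] [SecondCountableTopology E]
    [ENNReal.HolderConjugate Q P] {A : Set (E × E)} (hA1 : (0, 0) ∈ A)
    (hA3 : ∀ q : E × E, (∀ q' ∈ A, 0 ≤ ⟪q.1 - q'.1, q.2 - q'.2⟫) → q ∈ A)
    {J D : X → E} (hJ : MemLp J Q μ) (hD : MemLp D P μ) (hJm : Measurable J) (hDm : Measurable D)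
    (hminty : ∀ a b : X → E, MemLp a Q μ → MemLp b P μ → Measurable a → Measurable b →
      (∀ᵐ z ∂μ, (a z, b z) ∈ A) → 0 ≤ ∫ z, ⟪J z - a z, D z - b z⟫ ∂μ) :
    ∀ᵐ z ∂μ, (J z, D z) ∈ A := by
  have : Nonempty A := ⟨⟨_, hA1⟩⟩
  -- Starting at the origin makes `⟪J, D⟫` an integrable majorant of every `G m` below.
  let q : ℕ → E × E := fun k => Nat.casesOn k (0, 0) fun k => (TopologicalSpace.denseSeq A k : E × E)
  have hqA : ∀ k, q k ∈ A := by
    rintro (_ | k)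
    · exact hA1
    · exact (TopologicalSpace.denseSeq A k).2
  have hcont : ∀ w : E × E, Continuous fun r : A => ⟪w.1 - (r : E × E).1, w.2 - (r : E × E).2⟫ := by
    intro w; fun_prop
  have hq : ∀ w : E × E, ∀ ε, (∃ r ∈ A, ⟪w.1 - r.1, w.2 - r.2⟫ < ε) →
      ∃ k, ⟪w.1 - (q k).1, w.2 - (q k).2⟫ < ε := by
    rintro w ε ⟨r, hr, hlt⟩
    obtain ⟨k, hk⟩ := (TopologicalSpace.denseRange_denseSeq A).exists_mem_open
      (isOpen_lt (hcont w) continuous_const) ⟨⟨r, hr⟩, hlt⟩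
    exact ⟨k + 1, hk⟩
  let S : ℕ → X → E × E := fun m z => sel q (J z, D z) m
  let G : ℕ → X → ℝ := fun m z => ⟪J z - (S m z).1, D z - (S m z).2⟫
  have hSm : ∀ m, Measurable (S m) := fun m => (measurable_sel q m).comp (hJm.prodMk hDm)
  have hSA : ∀ m z, S m z ∈ A := fun m z => by
    obtain ⟨k, -, h⟩ := sel_mem_image q (J z, D z) m
    simp only [S, h, hqA]
  have hS1 : ∀ m, MemLp (fun z => (S m z).1) Q μ := fun m => by
    obtain ⟨C, hC⟩ := exists_bound_sel q m
    exact MemLp.of_bound (hSm m).fst.aestronglyMeasurable C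
      (.of_forall fun z => (norm_fst_le _).trans (hC _))
  have hS2 : ∀ m, MemLp (fun z => (S m z).2) P μ := fun m => by
    obtain ⟨C, hC⟩ := exists_bound_sel q m
    exact MemLp.of_bound (hSm m).snd.aestronglyMeasurable C
      (.of_forall fun z => (norm_snd_le _).trans (hC _))
  have hGi : ∀ m, Integrable (G m) μ := fun m =>
    integrable_inner_of_memLp (hJ.sub (hS1 m)) (hD.sub (hS2 m))
  have hG0 : ∀ m, 0 ≤ ∫ z, G m z ∂μ := fun m =>
    hminty _ _ (hS1 m) (hS2 m) (hSm m).fst (hSm m).snd (.of_forall (hSA m))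
  have hGle : ∀ {k m} z, k ≤ m → G m z ≤ ⟪J z - (q k).1, D z - (q k).2⟫ :=
    fun z hk => inner_sel_le q (J z, D z) hk
  have hpos : Tendsto (fun m => ∫ z, max (G m z) 0 ∂μ) atTop (nhds 0) := by
    have := tendsto_integral_of_dominated_convergence (μ := μ)
      (F := fun m z => max (G m z) 0) (f := fun _ => 0) (fun z => |⟪J z, D z⟫|)
      (fun m => (hGi m).pos_part.aestronglyMeasurable)
      (integrable_inner_of_memLp hJ hD).abs
      (fun m => .of_forall fun z => by
        have := hGle z (Nat.zero_le m)
        rw [show q 0 = (0, 0) from rfl, sub_zero, sub_zero] at this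
        rw [Real.norm_of_nonneg (le_max_right _ _)]
        exact max_le (this.trans (le_abs_self _)) (abs_nonneg _))
      (.of_forall fun z => by
        rw [Metric.tendsto_atTop]
        intro ε hε
        obtain ⟨k, hk⟩ := hq (J z, D z) ε (exists_inner_lt hA3 _ hε)
        refine ⟨k, fun m hm => ?_⟩
        rw [Real.dist_eq, sub_zero, abs_of_nonneg (le_max_right _ _)]
        exact max_lt ((hGle z hm).trans_lt hk) hε)
    simpa using this
  have hg : ∀ k, ∀ᵐ z ∂μ, 0 ≤ ⟪J z - (q k).1, D z - (q k).2⟫ := by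
    intro k
    have hki : Integrable (fun z => ⟪J z - (q k).1, D z - (q k).2⟫) μ :=
      integrable_inner_of_memLp (hJ.sub (memLp_const _)) (hD.sub (memLp_const _))
    have hle : ∫ z, max (-⟪J z - (q k).1, D z - (q k).2⟫) 0 ∂μ ≤ 0 := by
      refine ge_of_tendsto hpos ?_
      filter_upwards [eventually_ge_atTop k] with m hm
      have h1 : ∫ z, max (-⟪J z - (q k).1, D z - (q k).2⟫) 0 ∂μ ≤ ∫ z, max (-G m z) 0 ∂μ :=
        integral_mono hki.neg_part (hGi m).neg_part fun z =>
          max_le_max (neg_le_neg (hGle z hm)) le_rfl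
      have h2 : ∫ z, G m z ∂μ = ∫ z, max (G m z) 0 ∂μ - ∫ z, max (-G m z) 0 ∂μ := by
        rw [← integral_sub (hGi m).pos_part (hGi m).neg_part]
        congr 1; ext z
        rcases le_total (G m z) 0 with h | h
        · rw [max_eq_right h, max_eq_left (by linarith)]; ring
        · rw [max_eq_left h, max_eq_right (by linarith)]; ring
      linarith [hG0 m]
    have h0 := (integral_eq_zero_iff_of_nonneg (fun z => le_max_right _ _) hki.neg_part).1
      (le_antisymm hle (integral_nonneg fun z => le_max_right _ _))
    filter_upwards [h0] with z hz
    have := max_eq_right_iff.1 hz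
    exact neg_nonpos.1 this
  filter_upwards [ae_all_iff.2 hg] with z hz
  refine hA3 _ fun r hr => ?_
  by_contra! hlt
  obtain ⟨k, hk⟩ := hq (J z, D z) 0 ⟨r, hr, hlt⟩
  exact absurd (hz k) (not_le.2 hk)

/-! ### Weak convergence of the products -/

/-- Once `(J, D) ∈ A` a.e., the nonnegative functions `⟪Jn n - J, Dn n - D⟫` tend to `0` in `L¹`,
and the remaining terms of the expanded product converge weakly. -/
lemma tendsto_integral_mul [MeasurableSpace E] [BorelSpace E] [SecondCountableTopology E]
    [ENNReal.HolderConjugate Q P] {A : Set (E × E)}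
    (hA2 : ∀ q₁ ∈ A, ∀ q₂ ∈ A, 0 ≤ ⟪q₁.1 - q₂.1, q₁.2 - q₂.2⟫)
    {Jn Dn : ℕ → X → E} {J D : X → E}
    (hJn : ∀ n, MemLp (Jn n) Q μ) (hDn : ∀ n, MemLp (Dn n) P μ)
    (hJ : MemLp J Q μ) (hD : MemLp D P μ) (hJm : Measurable J) (hDm : Measurable D)
    (hinA : ∀ n, ∀ᵐ z ∂μ, (Jn n z, Dn n z) ∈ A) (hmem : ∀ᵐ z ∂μ, (J z, D z) ∈ A)
    (hJweak : ∀ Φ : X → E, Measurable Φ → MemLp Φ P μ →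
      Tendsto (fun n => ∫ z, ⟪Jn n z, Φ z⟫ ∂μ) atTop (nhds (∫ z, ⟪J z, Φ z⟫ ∂μ)))
    (hDweak : ∀ Ψ : X → E, Measurable Ψ → MemLp Ψ Q μ →
      Tendsto (fun n => ∫ z, ⟪Dn n z, Ψ z⟫ ∂μ) atTop (nhds (∫ z, ⟪D z, Ψ z⟫ ∂μ)))
    (hlim : ∀ ε > 0, ∀ᶠ n in atTop, ∫ z, ⟪Jn n z, Dn n z⟫ ∂μ ≤ ∫ z, ⟪J z, D z⟫ ∂μ + ε)
    {φ : X → ℝ} (hφ : Measurable φ) {C : ℝ} (hC : ∀ z, |φ z| ≤ C) :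
    Tendsto (fun n => ∫ z, ⟪Jn n z, Dn n z⟫ * φ z ∂μ) atTop
      (nhds (∫ z, ⟪J z, D z⟫ * φ z ∂μ)) := by
  let H : ℕ → X → ℝ := fun n z => ⟪Jn n z - J z, Dn n z - D z⟫
  have hHi : ∀ n, Integrable (H n) μ := fun n =>
    integrable_inner_of_memLp ((hJn n).sub hJ) ((hDn n).sub hD)
  have hH0 : ∀ n, ∀ᵐ z ∂μ, 0 ≤ H n z := fun n => by
    filter_upwards [hinA n, hmem] with z h1 h2
    exact hA2 _ h1 _ h2
  have expand : ∀ (n : ℕ) (ψ : X → ℝ), Measurable ψ → (∃ c, ∀ z, |ψ z| ≤ c) →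
      ∫ z, ⟪Jn n z, Dn n z⟫ * ψ z ∂μ = ∫ z, H n z * ψ z ∂μ + ∫ z, ⟪Jn n z, ψ z • D z⟫ ∂μ
        + ∫ z, ⟪Dn n z, ψ z • J z⟫ ∂μ - ∫ z, ⟪J z, D z⟫ * ψ z ∂μ := by
    rintro n ψ hψ ⟨c, hc⟩
    have hb : ∀ {f : X → ℝ}, Integrable f μ → Integrable (fun z => f z * ψ z) μ := fun hf =>
      hf.mul_bdd (c := c) hψ.aestronglyMeasurable (.of_forall hc)
    have h1 := hb (hHi n)
    have h2 : Integrable (fun z => ⟪Jn n z, ψ z • D z⟫) μ := by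
      simpa only [real_inner_smul_right, mul_comm] using
        hb (integrable_inner_of_memLp (hJn n) hD)
    have h3 : Integrable (fun z => ⟪Dn n z, ψ z • J z⟫) μ := by
      have := hb (integrable_inner_of_memLp hJ (hDn n))
      refine this.congr (.of_forall fun z => ?_)
      simp only [real_inner_smul_right, real_inner_comm (J z) (Dn n z)]
      ring
    have h4 := hb (integrable_inner_of_memLp hJ hD)
    have h12 : Integrable (fun z => H n z * ψ z + ⟪Jn n z, ψ z • D z⟫) μ := h1.add h2
    have h123 : Integrable (fun z => H n z * ψ z + ⟪Jn n z, ψ z • D z⟫ + ⟪Dn n z, ψ z • J z⟫) μ :=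
      h12.add h3
    rw [← integral_add h1 h2, ← integral_add h12 h3, ← integral_sub h123 h4]
    congr 1; ext z
    simp only [H, inner_sub_left, inner_sub_right, real_inner_smul_right,
      real_inner_comm (J z) (Dn n z)]
    ring
  have hweak : ∀ (ψ : X → ℝ), Measurable ψ → (∃ c, ∀ z, |ψ z| ≤ c) →
      Tendsto (fun n => ∫ z, ⟪Jn n z, ψ z • D z⟫ ∂μ + ∫ z, ⟪Dn n z, ψ z • J z⟫ ∂μ
        - ∫ z, ⟪J z, D z⟫ * ψ z ∂μ) atTop (nhds (∫ z, ⟪J z, D z⟫ * ψ z ∂μ)) := by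
    rintro ψ hψ ⟨c, hc⟩
    have hb : ∀ {r : ENNReal} {f : X → E}, MemLp f r μ → MemLp (fun z => ψ z • f z) r μ :=
      fun {r f} hf => by
        refine (hf.const_smul c).of_le (hψ.aestronglyMeasurable.smul hf.1) (.of_forall fun z => ?_)
        simp only [norm_smul, Pi.smul_apply, Real.norm_eq_abs]
        exact mul_le_mul_of_nonneg_right ((hc z).trans (le_abs_self c)) (norm_nonneg _)
    have e1 : ∀ z, ⟪J z, ψ z • D z⟫ = ⟪J z, D z⟫ * ψ z := fun z => by
      rw [real_inner_smul_right, mul_comm]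
    have e2 : ∀ z, ⟪D z, ψ z • J z⟫ = ⟪J z, D z⟫ * ψ z := fun z => by
      rw [real_inner_smul_right, mul_comm, real_inner_comm]
    have := ((hJweak _ (hψ.smul hDm) (hb hD)).add (hDweak _ (hψ.smul hJm) (hb hJ))).sub_const
      (∫ z, ⟪J z, D z⟫ * ψ z ∂μ)
    simpa only [Pi.smul_apply', e1, e2, add_sub_cancel_right] using this
  have hH : Tendsto (fun n => ∫ z, H n z ∂μ) atTop (nhds 0) := by
    -- The weight `1` turns the expansion into a formula for `∫ H n`.
    have h1 := hweak (fun _ => 1) measurable_const ⟨1, by simp⟩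
    have h2 := fun n => expand n (fun _ => 1) measurable_const ⟨1, by simp⟩
    simp only [mul_one] at h1 h2
    rw [Metric.tendsto_atTop]
    intro ε hε
    have h3 := Metric.tendsto_atTop.1 h1 (ε / 2) (by linarith)
    obtain ⟨n₀, hn₀⟩ := h3
    obtain ⟨n₁, hn₁⟩ := eventually_atTop.1 (hlim (ε / 4) (by linarith))
    refine ⟨max n₀ n₁, fun n hn => ?_⟩
    have h4 := hn₀ n ((le_max_left _ _).trans hn)
    have h5 := hn₁ n ((le_max_right _ _).trans hn)
    have h6 := integral_nonneg_of_ae (hH0 n)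
    rw [Real.dist_eq, abs_lt] at h4
    rw [Real.dist_eq, sub_zero, abs_of_nonneg h6]
    linarith [h2 n]
  have hHφ : Tendsto (fun n => ∫ z, H n z * φ z ∂μ) atTop (nhds 0) := by
    have hCH : Tendsto (fun n => C * ∫ z, H n z ∂μ) atTop (nhds 0) := by
      simpa using hH.const_mul C
    refine squeeze_zero_norm (fun n => ?_) hCH
    rw [← integral_const_mul]
    refine norm_integral_le_of_norm_le ((hHi n).const_mul C) ?_
    filter_upwards [hH0 n] with z hz
    rw [norm_mul, Real.norm_of_nonneg hz, Real.norm_eq_abs, mul_comm]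
    exact mul_le_mul_of_nonneg_right (hC z) hz
  have := hHφ.add (hweak φ hφ ⟨C, hC⟩)
  rw [zero_add] at this
  refine this.congr fun n => ?_
  rw [expand n φ hφ ⟨C, hC⟩]
  ring

end GraphStability

open GraphStability

/-- stability of a maximal monotone p-coercive graph A under weak
convergence: if (Jⁿ,Dⁿ) ∈ A a.e. on a bounded measurable U ⊂ ℝ^{1+d}, Jⁿ ⇀ J weakly in
L^{p'}(U;M), Dⁿ ⇀ D weakly in L^p(U;M), and limsup ∫_U Jⁿ:Dⁿ ≤ ∫_U J:D, then
(J,D) ∈ A a.e. in U and Jⁿ:Dⁿ ⇀ J:D weakly in L¹(U). -/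
theorem graph_stability_weak_convergence {N dm : ℕ} (hN : 1 ≤ N) (hdm : 1 ≤ dm)
    (p : ℝ) (hp : 1 < p)
    (A : Set (Mat N dm × Mat N dm))
    (hA1 : ((0 : Mat N dm), (0 : Mat N dm)) ∈ A)
    (hA2 : ∀ q₁ ∈ A, ∀ q₂ ∈ A, 0 ≤ ⟪q₁.1 - q₂.1, q₁.2 - q₂.2⟫)
    (hA3 : ∀ q : Mat N dm × Mat N dm, (∀ q' ∈ A, 0 ≤ ⟪q.1 - q'.1, q.2 - q'.2⟫) → q ∈ A)
    (hA4 : ∃ C₁ C₂ : ℝ, 0 < C₁ ∧ 0 < C₂ ∧ ∀ q ∈ A,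
      C₁ * (‖q.1‖ ^ (p / (p - 1)) + ‖q.2‖ ^ p) - C₂ ≤ ⟪q.1, q.2⟫)
    (U : Set (EuclideanSpace ℝ (Fin (1 + dm))))
    (hUmeas : MeasurableSet U) (hUbdd : Bornology.IsBounded U)
    (Jn Dn : ℕ → EuclideanSpace ℝ (Fin (1 + dm)) → Mat N dm)
    (hJnmeas : ∀ n, Measurable (Jn n)) (hDnmeas : ∀ n, Measurable (Dn n))
    (hJnint : ∀ n, IntegrableOn (fun z => ‖Jn n z‖ ^ (p / (p - 1))) U)
    (hDnint : ∀ n, IntegrableOn (fun z => ‖Dn n z‖ ^ p) U)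
    (hinA : ∀ n, ∀ᵐ z ∂(volume.restrict U), (Jn n z, Dn n z) ∈ A)
    (J D : EuclideanSpace ℝ (Fin (1 + dm)) → Mat N dm)
    (hJmeas : Measurable J) (hDmeas : Measurable D)
    (hJint : IntegrableOn (fun z => ‖J z‖ ^ (p / (p - 1))) U)
    (hDint : IntegrableOn (fun z => ‖D z‖ ^ p) U)
    -- Jⁿ ⇀ J weakly in L^{p'}(U;M)
    (hJweak : ∀ Φ : EuclideanSpace ℝ (Fin (1 + dm)) → Mat N dm, Measurable Φ →
      IntegrableOn (fun z => ‖Φ z‖ ^ p) U →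
      Tendsto (fun n => ∫ z in U, ⟪Jn n z, Φ z⟫) atTop (nhds (∫ z in U, ⟪J z, Φ z⟫)))
    -- Dⁿ ⇀ D weakly in L^p(U;M)
    (hDweak : ∀ Ψ : EuclideanSpace ℝ (Fin (1 + dm)) → Mat N dm, Measurable Ψ →
      IntegrableOn (fun z => ‖Ψ z‖ ^ (p / (p - 1))) U →
      Tendsto (fun n => ∫ z in U, ⟪Dn n z, Ψ z⟫) atTop (nhds (∫ z in U, ⟪D z, Ψ z⟫)))
    -- limsup condition
    (hlimsup : limsup (fun n => ∫ z in U, ⟪Jn n z, Dn n z⟫) atTop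
        ≤ ∫ z in U, ⟪J z, D z⟫) :
    (∀ᵐ z ∂(volume.restrict U), (J z, D z) ∈ A) ∧
    (∀ φ : EuclideanSpace ℝ (Fin (1 + dm)) → ℝ, Measurable φ → (∃ C : ℝ, ∀ z, |φ z| ≤ C) →
      Tendsto (fun n => ∫ z in U, ⟪Jn n z, Dn n z⟫ * φ z) atTop
        (nhds (∫ z in U, ⟪J z, D z⟫ * φ z))) := by
  obtain ⟨C₁, C₂, hC₁, hC₂, hA4⟩ := hA4
  have hpq : (p / (p - 1)).HolderConjugate p :=
    ((Real.holderConjugate_iff_eq_conjExponent hp).2 rfl).symm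
  have : ENNReal.HolderConjugate (ENNReal.ofReal (p / (p - 1))) (ENNReal.ofReal p) :=
    hpq.ennrealOfReal
  have : IsFiniteMeasure (volume.restrict U) := ⟨by simpa using hUbdd.measure_lt_top⟩
  have hJn := fun n => memLp_ofReal hpq.pos (hJnmeas n).aestronglyMeasurable (hJnint n)
  have hDn := fun n => memLp_ofReal hpq.symm.pos (hDnmeas n).aestronglyMeasurable (hDnint n)
  have hJ := memLp_ofReal hpq.pos hJmeas.aestronglyMeasurable hJint
  have hD := memLp_ofReal hpq.symm.pos hDmeas.aestronglyMeasurable hDint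
  have hJw := fun Φ hm (hΦ : MemLp Φ (ENNReal.ofReal p) (volume.restrict U)) =>
    hJweak Φ hm (integrable_of_memLp_ofReal hpq.symm.pos hΦ)
  have hDw := fun Ψ hm (hΨ : MemLp Ψ (ENNReal.ofReal (p / (p - 1))) (volume.restrict U)) =>
    hDweak Ψ hm (integrable_of_memLp_ofReal hpq.pos hΨ)
  -- Without this bound the real-valued `limsup` could be the junk value `0`.
  obtain ⟨B, hB⟩ := exists_integral_le hpq hC₁ hC₂ hA4 hJn hDn hinA hJw
  have hlim : ∀ ε > 0, ∀ᶠ n in atTop,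
      ∫ z in U, ⟪Jn n z, Dn n z⟫ ≤ (∫ z in U, ⟪J z, D z⟫) + ε := fun ε hε =>
    (eventually_lt_of_limsup_lt (hlimsup.trans_lt (lt_add_of_pos_right _ hε))
      (isBoundedUnder_of ⟨B, hB⟩)).mono fun _ h => h.le
  have hmem := ae_mem hA1 hA3 hJ hD hJmeas hDmeas fun a b ha hb ham hbm hab =>
    integral_inner_nonneg hA2 hJn hDn hJ hD hinA hJw hDw hlim ha hb ham hbm hab
  exact ⟨hmem, fun φ hφ ⟨_, hC⟩ => tendsto_integral_mul hA2 hJn hDn hJ hD hJmeas hDmeas hinA hmem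
    hJw hDw hlim hφ hC⟩
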